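/- arXiv:2408.11034 — 5 statements merged into one kernel-verified Lean document; each statement's English description precedes it below -/
import Mathlib

section
/- Let V' = (v'_1, …, v'_m) be unit vectors in ℝ² with 0 = arg(v'_1) ≤ arg(v'_2) ≤ ⋯ ≤ arg(v'_m) ≤ π. If V = (v_1, …, v_{n+1}) is a sequence of unit vectors in ℝ² which contains V' as a subsequence and which satisfies 0 = arg(v_1) ≤ arg(v_2) ≤ ⋯ ≤ arg(v_{n+1}) = arg(v'_m), then Σ_{i=1}^n ‖v_i − v_{i+1}‖² ≤ Σ_{i=1}^{m−1} ‖v'_i − v'_{i+1}‖². -/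
/-!
For unit vectors, `‖u - v‖² = 2 - 2 cos (arg u - arg v)` (`norm_sub_sq_eq_cos`). The function
`t ↦ 2 - 2 cos t` is superadditive for nonnegative arguments with sum at most `π`
(`chord_superadd`), because
`cos a + cos b - 1 - cos (a + b) = 2 cos ((a + b) / 2) (cos ((a - b) / 2) - cos ((a + b) / 2))`.
Hence, along a monotone sequence of angles of total length at most `π`, the sum over consecutive
terms is bounded by the value at the total length (`chord_sum_le`). This is applied to each
block of `V` between two consecutive vectors of `V'`. The blocks of `V` before the first and
after the last vector of `V'` have constant argument and contribute nothing.
-/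

open Real

/-- The argument `θ ∈ [0, 2π)` of a (unit) vector `v ∈ ℝ²`, so that
`v = (cos θ, sin θ)`. -/
noncomputable def arg2 (v : EuclideanSpace ℝ (Fin 2)) : ℝ :=
  if 0 ≤ v 1 then Real.arccos (v 0) else 2 * Real.pi - Real.arccos (v 0)

lemma unit_eq_cos_sin (v : EuclideanSpace ℝ (Fin 2)) (hv : ‖v‖ = 1) :
    v 0 = cos (arg2 v) ∧ v 1 = sin (arg2 v) := by
  have h : v 0 ^ 2 + v 1 ^ 2 = 1 := by
    have h2 := EuclideanSpace.norm_sq_eq v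
    rw [hv, Fin.sum_univ_two] at h2
    simp only [Real.norm_eq_abs, sq_abs] at h2
    linarith
  have h1 : -1 ≤ v 0 := by nlinarith [sq_nonneg (v 1)]
  have h2 : v 0 ≤ 1 := by nlinarith [sq_nonneg (v 1)]
  have h3 : 1 - v 0 ^ 2 = v 1 ^ 2 := by linarith
  unfold arg2
  split_ifs with h0
  · rw [cos_arccos h1 h2, sin_arccos, h3, sqrt_sq h0]
    exact ⟨rfl, rfl⟩
  · rw [cos_two_pi_sub, sin_two_pi_sub, cos_arccos h1 h2, sin_arccos, h3, sqrt_sq_eq_abs,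
      abs_of_neg (not_le.mp h0), neg_neg]
    exact ⟨rfl, rfl⟩

lemma norm_sub_sq_eq_cos (u v : EuclideanSpace ℝ (Fin 2)) (hu : ‖u‖ = 1) (hv : ‖v‖ = 1) :
    ‖u - v‖ ^ 2 = 2 - 2 * cos (arg2 v - arg2 u) := by
  obtain ⟨hu0, hu1⟩ := unit_eq_cos_sin u hu
  obtain ⟨hv0, hv1⟩ := unit_eq_cos_sin v hv
  rw [EuclideanSpace.norm_sq_eq, Fin.sum_univ_two]
  simp only [Real.norm_eq_abs, sq_abs, PiLp.sub_apply]
  rw [hu0, hu1, hv0, hv1, cos_sub]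
  nlinarith [sin_sq_add_cos_sq (arg2 u), sin_sq_add_cos_sq (arg2 v)]

lemma chord_superadd {a b : ℝ} (ha : 0 ≤ a) (hb : 0 ≤ b) (hab : a + b ≤ π) :
    (2 - 2 * cos a) + (2 - 2 * cos b) ≤ 2 - 2 * cos (a + b) := by
  have h1 : cos a + cos b = 2 * cos ((a + b) / 2) * cos ((a - b) / 2) := cos_add_cos a b
  have h2 : cos (a + b) = 2 * cos ((a + b) / 2) ^ 2 - 1 := by
    rw [← cos_two_mul]; congr 1; ring
  have h3 : 0 ≤ cos ((a + b) / 2) := cos_nonneg_of_mem_Icc ⟨by linarith [pi_pos], by linarith⟩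
  have h4 : cos ((a + b) / 2) ≤ cos ((a - b) / 2) := by
    rw [← cos_abs ((a - b) / 2)]
    apply cos_le_cos_of_nonneg_of_le_pi (abs_nonneg _) (by linarith)
    rw [abs_le]
    constructor <;> linarith
  nlinarith [mul_nonneg h3 (sub_nonneg.2 h4)]

lemma chord_sum_le (t : ℕ → ℝ) (ht : Monotone t) {i j : ℕ} (hij : i ≤ j)
    (hπ : t j - t i ≤ π) :
    ∑ k ∈ Finset.Ico i j, (2 - 2 * cos (t (k + 1) - t k)) ≤ 2 - 2 * cos (t j - t i) := by
  induction j, hij using Nat.le_induction with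
  | base => simp
  | succ j hij ih =>
    have h1 : t i ≤ t j := ht hij
    have h2 : t j ≤ t (j + 1) := ht (Nat.le_succ j)
    rw [Finset.sum_Ico_succ_top hij]
    have h := chord_superadd (sub_nonneg.2 h1) (sub_nonneg.2 h2) (by linarith)
    rw [show t j - t i + (t (j + 1) - t j) = t (j + 1) - t i by ring] at h
    linarith [ih (by linarith)]

/-- Lemma 3.2: let `V' = (v'₁, …, v'_{m+1})` be unit vectors in `ℝ²` with
`0 = arg(v'₁) ≤ ⋯ ≤ arg(v'_{m+1}) ≤ π`.  If `V = (v₁, …, v_{n+1})` is a sequence of unit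
vectors in `ℝ²` containing `V'` as a subsequence (via a strictly increasing index map `φ`)
with `0 = arg(v₁) ≤ ⋯ ≤ arg(v_{n+1}) = arg(v'_{m+1})`, then
`Σ_{i=1}^n ‖vᵢ − v_{i+1}‖² ≤ Σ_{i=1}^m ‖v'ᵢ − v'_{i+1}‖²`. -/
theorem stmt_9 (m n : ℕ)
    (V' : Fin (m + 1) → EuclideanSpace ℝ (Fin 2))
    (V : Fin (n + 1) → EuclideanSpace ℝ (Fin 2))
    (hunit' : ∀ i, ‖V' i‖ = 1) (hunit : ∀ i, ‖V i‖ = 1)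
    (harg0' : arg2 (V' 0) = 0)
    (hmono' : Monotone fun i => arg2 (V' i))
    (hle' : arg2 (V' (Fin.last m)) ≤ π)
    (φ : Fin (m + 1) → Fin (n + 1)) (hφ : StrictMono φ)
    (hsub : ∀ i, V (φ i) = V' i)
    (harg0 : arg2 (V 0) = 0)
    (hmono : Monotone fun i => arg2 (V i))
    (hlast : arg2 (V (Fin.last n)) = arg2 (V' (Fin.last m))) :
    ∑ i : Fin n, ‖V i.castSucc - V i.succ‖ ^ 2 ≤
      ∑ i : Fin m, ‖V' i.castSucc - V' i.succ‖ ^ 2 := by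
  -- The arguments of `V`, extended to all of `ℕ` by the last one.
  let t : ℕ → ℝ := fun k => arg2 (V ⟨min k n, by omega⟩)
  have ht : Monotone t := fun a b hab =>
    hmono (Fin.mk_le_mk.2 (min_le_min_right n hab))
  have htV : ∀ i : Fin (n + 1), t i = arg2 (V i) := fun i => by
    have : (⟨min (i : ℕ) n, by omega⟩ : Fin (n + 1)) = i := Fin.ext (by simp; omega)
    simp only [t, this]
  have ht0 : t 0 = 0 := (htV 0).trans harg0
  have htn : t n = arg2 (V' (Fin.last m)) := by
    rw [← hlast, ← htV (Fin.last n), Fin.val_last]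
  have htφ : ∀ i, t (φ i) = arg2 (V' i) := fun i => by rw [htV, hsub]
  have hgap : ∀ i j, j ≤ n → t j - t i ≤ π := fun i j hj => by
    have h1 : t j ≤ t n := ht hj
    have h2 : t 0 ≤ t i := ht (Nat.zero_le i)
    linarith
  have hL : ∑ i : Fin n, ‖V i.castSucc - V i.succ‖ ^ 2
      = ∑ k ∈ Finset.Ico 0 n, (2 - 2 * cos (t (k + 1) - t k)) := by
    rw [← Finset.range_eq_Ico, ← Fin.sum_univ_eq_sum_range
      (fun k => 2 - 2 * cos (t (k + 1) - t k))]
    refine Finset.sum_congr rfl fun i _ => ?_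
    rw [norm_sub_sq_eq_cos _ _ (hunit _) (hunit _), ← htV, ← htV, Fin.val_succ, Fin.val_castSucc]
  have key : ∀ k : Fin (m + 1), ∑ k ∈ Finset.Ico 0 (φ k : ℕ), (2 - 2 * cos (t (k + 1) - t k))
      ≤ ∑ i : Fin m with i.castSucc < k, ‖V' i.castSucc - V' i.succ‖ ^ 2 := by
    intro k
    induction k using Fin.induction with
    | zero =>
      refine (chord_sum_le t ht (Nat.zero_le _) (hgap _ _ (by omega))).trans ?_
      simp [htφ, ht0, harg0']
    | succ i ih =>
      have hlt : (φ i.castSucc : ℕ) ≤ φ i.succ := hφ.monotone (Fin.castSucc_le_succ i)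
      rw [← Finset.sum_Ico_consecutive _ (Nat.zero_le _) hlt]
      have hset : (Finset.univ.filter fun j : Fin m => j.castSucc < i.succ)
          = insert i (Finset.univ.filter fun j : Fin m => j.castSucc < i.castSucc) := by
        ext j
        simp only [Finset.mem_filter, Finset.mem_univ, true_and, Finset.mem_insert, Fin.lt_def,
          Fin.ext_iff, Fin.val_castSucc, Fin.val_succ]
        omega
      rw [hset, Finset.sum_insert (by simp), norm_sub_sq_eq_cos _ _ (hunit' _) (hunit' _),
        ← htφ, ← htφ, add_comm]
      exact add_le_add (chord_sum_le t ht hlt (hgap _ _ (by omega))) ih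
  have hφn : (φ (Fin.last m) : ℕ) ≤ n := by omega
  rw [hL, ← Finset.sum_Ico_consecutive _ (Nat.zero_le _) hφn]
  have h1 := key (Fin.last m)
  have h2 := chord_sum_le t ht hφn (hgap _ _ le_rfl)
  rw [htφ, htn, sub_self, cos_zero] at h2
  simp only [Fin.castSucc_lt_last, Finset.filter_true] at h1
  linarith
end

section
/- For every real r > √2 there exists a constant c = c(r) > 0 such that if V = (v_1, …, v_n) is a sequence of unit vectors in ℝ² with n even, then Pr[‖σ_V‖ ≤ r] ≥ c/n. -/
/-!
Flipping the signs of some vectors changes nothing, so all directions may be taken in a half plane.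
Sort them by angle, `x_0, …, x_{2m-1}`, and put `x_{2m} = -x_0`. In any direction the steps
`x_{j+1} - x_j` project to increments of a cosine along a half period, so all signed sums of all the
steps have norm at most `2` (`norm_sum_steps_le`). By the parallelogram law, either the even or
the odd steps have all their signed sums of norm at most `√2` (`exists_parity`). This yields a
partition of the vectors into pairs `(w_i, w'_i)`, up to sign, such that
`‖∑ ± (w_i - w'_i)‖ ≤ √2` for all signs (`exists_pairing`).

Write the random sum as `∑ a_i w_i - ∑ b_i w'_i = (S a - S b) + ∑ b_i (w_i - w'_i)`, where
`S a = ∑ a_i w_i` and the signs `a`, `b` are independent. The last term has norm at most `√2`, and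
`S a`, `S b` are independent copies of a random vector with second moment `m`, so by pigeonhole and
Cauchy–Schwarz they are within `r - √2` of each other with probability at least a constant over `m`
(`exists_collision_bound`).
-/

/-- The real sign `+1` or `-1` associated to a Boolean. -/
noncomputable def rsign (b : Bool) : ℝ := if b then 1 else -1

/-- The signed sum `ε₁ v₁ + ⋯ + εₙ vₙ` determined by a vector of Booleans. -/
noncomputable def signedSum {d n : ℕ} (V : Fin n → EuclideanSpace ℝ (Fin d))
    (ε : Fin n → Bool) : EuclideanSpace ℝ (Fin d) :=
  ∑ i, rsign (ε i) • V i

/-- `probLe V r` is the probability, over independent uniform signs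
`ε ∈ {−1,+1}ⁿ`, that `‖ε₁ v₁ + ⋯ + εₙ vₙ‖ ≤ r`. -/
noncomputable def probLe {d n : ℕ} (V : Fin n → EuclideanSpace ℝ (Fin d)) (r : ℝ) : ℝ :=
  (Nat.card {ε : Fin n → Bool // ‖signedSum V ε‖ ≤ r} : ℝ) / 2 ^ n

/-! ### Polar coordinates and variation along a half circle -/

/-- The unit vector at angle `θ`. -/
noncomputable def dir (θ : ℝ) : EuclideanSpace ℝ (Fin 2) := !₂[Real.cos θ, Real.sin θ]

lemma inner_dir (φ θ : ℝ) : inner ℝ (dir φ) (dir θ) = Real.cos (θ - φ) := by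
  simp [dir, PiLp.inner_apply, Fin.sum_univ_two, Real.cos_sub]

lemma dir_add_pi (θ : ℝ) : dir (θ + Real.pi) = -dir θ := by
  ext i
  fin_cases i <;> simp [dir]

lemma exists_polar (v : EuclideanSpace ℝ (Fin 2)) :
    ∃ φ, v = ‖v‖ • dir φ ∧ φ ≤ Real.pi ∧ (0 ≤ v 1 → 0 ≤ φ) := by
  have hn : ‖(⟨v 0, v 1⟩ : ℂ)‖ = ‖v‖ := by
    rw [EuclideanSpace.norm_eq, Complex.norm_def, Complex.normSq_mk, Fin.sum_univ_two]
    simp [pow_two]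
  refine ⟨Complex.arg ⟨v 0, v 1⟩, ?_, Complex.arg_le_pi _, fun h => ?_⟩
  · ext i
    have h0 := Complex.norm_mul_cos_arg ⟨v 0, v 1⟩
    have h1 := Complex.norm_mul_sin_arg ⟨v 0, v 1⟩
    rw [hn] at h0 h1
    fin_cases i
    · simpa [dir] using h0.symm
    · simpa [dir] using h1.symm
  · exact Complex.arg_nonneg_iff.2 h

/-- Every unit vector is, up to sign, a direction with angle in `[0, π]`. -/
lemma exists_sign_dir (v : EuclideanSpace ℝ (Fin 2)) (hv : ‖v‖ = 1) :
    ∃ (b : Bool) (θ : ℝ), 0 ≤ θ ∧ θ ≤ Real.pi ∧ v = rsign b • dir θ := by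
  by_cases h : 0 ≤ v 1
  · obtain ⟨φ, h1, h2, h3⟩ := exists_polar v
    exact ⟨true, φ, h3 h, h2, by simpa [rsign, hv] using h1⟩
  · obtain ⟨φ, h1, h2, h3⟩ := exists_polar (-v)
    refine ⟨false, φ, h3 (by simpa using (not_le.1 h).le), h2, ?_⟩
    rw [norm_neg, hv, one_smul] at h1
    simp [rsign, ← h1]

lemma abs_cos_sub_cos_le {a b : ℝ} (hab : a ≤ b) :
    |Real.cos b - Real.cos a| ≤ ∫ t in a..b, |Real.sin t| := by
  have h := intervalIntegral.norm_integral_le_integral_norm (f := Real.sin)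
    (μ := MeasureTheory.volume) hab
  rw [integral_sin, Real.norm_eq_abs, abs_sub_comm] at h
  simpa using h

lemma integral_abs_sin_half_circle (a : ℝ) : ∫ t in a..(a + Real.pi), |Real.sin t| = 2 := by
  have hp : Function.Periodic (fun t => |Real.sin t|) Real.pi := fun t => by simp
  rw [hp.intervalIntegral_add_eq a 0, zero_add]
  have : ∫ t in (0 : ℝ)..Real.pi, |Real.sin t| = ∫ t in (0 : ℝ)..Real.pi, Real.sin t := by
    apply intervalIntegral.integral_congr
    intro t ht
    rw [Set.uIcc_of_le Real.pi_pos.le] at ht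
    exact abs_of_nonneg (Real.sin_nonneg_of_mem_Icc ht)
  rw [this, integral_sin]
  norm_num

/-- If points are placed in order along a half circle, ending at the antipode of the first one, then
every signed sum of the consecutive steps has norm at most `2`: in any direction, the steps project
to the increments of a cosine, whose total variation over a half period is `2`. -/
lemma norm_sum_steps_le (n : ℕ) (ϑ : ℕ → ℝ) (hmono : Monotone ϑ) (hend : ϑ n = ϑ 0 + Real.pi)
    (s : ℕ → ℝ) (hs : ∀ j, |s j| ≤ 1) :
    ‖∑ j ∈ Finset.range n, s j • (dir (ϑ (j + 1)) - dir (ϑ j))‖ ≤ 2 := by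
  set z := ∑ j ∈ Finset.range n, s j • (dir (ϑ (j + 1)) - dir (ϑ j)) with hz
  obtain ⟨φ, hφ, -⟩ := exists_polar z
  have hone : inner ℝ (dir φ) (dir φ) = (1 : ℝ) := by rw [inner_dir]; simp
  have key : inner ℝ (dir φ) z ≤ (2 : ℝ) := by
    rw [hz, inner_sum]
    calc ∑ j ∈ Finset.range n, inner ℝ (dir φ) (s j • (dir (ϑ (j + 1)) - dir (ϑ j)))
        ≤ ∑ j ∈ Finset.range n, ∫ t in (ϑ j - φ)..(ϑ (j + 1) - φ), |Real.sin t| := by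
          refine Finset.sum_le_sum fun j _ => ?_
          rw [inner_smul_right, inner_sub_right, inner_dir, inner_dir]
          refine le_trans (le_abs_self _) ?_
          rw [abs_mul]
          refine le_trans (mul_le_of_le_one_left (abs_nonneg _) (hs j)) ?_
          exact abs_cos_sub_cos_le (by linarith [hmono (Nat.le_succ j)])
      _ = ∫ t in (ϑ 0 - φ)..(ϑ n - φ), |Real.sin t| := by
          exact intervalIntegral.sum_integral_adjacent_intervals (a := fun j => ϑ j - φ)
            fun j _ => (Real.continuous_sin.abs).intervalIntegrable _ _
      _ = 2 := by
          rw [hend, show ϑ 0 + Real.pi - φ = (ϑ 0 - φ) + Real.pi by ring]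
          exact integral_abs_sin_half_circle _
  rw [hφ, inner_smul_right, hone, mul_one] at key
  exact key

/-! ### Pairing the vectors -/

lemma sum_range_two_mul {M : Type*} [AddCommMonoid M] (f : ℕ → M) (m : ℕ) :
    ∑ j ∈ Finset.range (2 * m), f j =
      ∑ i ∈ Finset.range m, f (2 * i) + ∑ i ∈ Finset.range m, f (2 * i + 1) := by
  induction m with
  | zero => simp
  | succ m ih =>
    rw [show 2 * (m + 1) = 2 * m + 1 + 1 by ring, Finset.sum_range_succ, Finset.sum_range_succ, ih,
      Finset.sum_range_succ, Finset.sum_range_succ]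
    abel

/-- Either the even steps or the odd steps have all signed sums of norm at most `√2`. Otherwise pick
large signed sums `x` of even steps and `y` of odd steps: `x + y` and `x - y` have norm at
most `2`, contradicting the parallelogram law. -/
lemma exists_parity (m : ℕ) (ϑ : ℕ → ℝ) (hmono : Monotone ϑ) (hend : ϑ (2 * m) = ϑ 0 + Real.pi) :
    ∃ k < 2, ∀ s : ℕ → ℝ, (∀ j, |s j| ≤ 1) →
      ‖∑ i ∈ Finset.range m, s i • (dir (ϑ (2 * i + k + 1)) - dir (ϑ (2 * i + k)))‖ ≤ √2 := by
  by_contra! hcon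
  obtain ⟨s, hs, hx⟩ := hcon 0 (by norm_num)
  obtain ⟨s', hs', hy⟩ := hcon 1 (by norm_num)
  have h1 := norm_sum_steps_le (2 * m) ϑ hmono hend
    (fun j => if j % 2 = 0 then s (j / 2) else s' (j / 2)) (fun j => by
      split_ifs <;> simp [hs, hs'])
  have h2 := norm_sum_steps_le (2 * m) ϑ hmono hend
    (fun j => if j % 2 = 0 then s (j / 2) else -s' (j / 2)) (fun j => by
      split_ifs <;> simp [hs, hs'])
  rw [sum_range_two_mul] at h1 h2
  have e2 : ∀ i, (2 * i + 1) / 2 = i := fun i => by omega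
  have e3 : ∀ i, (2 * i + 1) % 2 = 1 := fun i => by omega
  simp only [Nat.mul_mod_right, if_true, Nat.mul_div_cancel_left _ (zero_lt_two), e2, e3,
    one_ne_zero, if_false, neg_smul, Finset.sum_neg_distrib, ← sub_eq_add_neg] at h1 h2
  simp only [add_zero] at hx
  set x := ∑ i ∈ Finset.range m, s i • (dir (ϑ (2 * i + 1)) - dir (ϑ (2 * i)))
  set y := ∑ i ∈ Finset.range m, s' i • (dir (ϑ (2 * i + 1 + 1)) - dir (ϑ (2 * i + 1)))
  have hp := parallelogram_law_with_norm ℝ x y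
  have q : √2 * √2 = 2 := Real.mul_self_sqrt (by norm_num)
  have q0 := Real.sqrt_nonneg 2
  nlinarith [norm_nonneg (x + y), norm_nonneg (x - y)]

/-- The vectors can be matched into pairs and given signs so that all signed sums of the differences
within pairs have norm at most `√2`. The vectors are sorted by angle modulo `π`, and matched with a
cyclic neighbour; there are two such matchings, and one of them works. -/
lemma exists_pairing (m : ℕ) (V : Fin (2 * m) → EuclideanSpace ℝ (Fin 2)) (hV : ∀ i, ‖V i‖ = 1) :
    ∃ (e : Fin m ⊕ Fin m ≃ Fin (2 * m)) (t : Fin m ⊕ Fin m → Bool), ∀ b : Fin m → Bool,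
      ‖∑ i, rsign (b i) • (rsign (t (Sum.inl i)) • V (e (Sum.inl i)) -
        rsign (t (Sum.inr i)) • V (e (Sum.inr i)))‖ ≤ √2 := by
  rcases Nat.eq_zero_or_pos m with rfl | hm
  · exact ⟨finSumFinEquiv.trans (finCongr rfl), fun _ => true, fun b => by simp⟩
  choose β θ hθ0 hθπ hβ using fun i => exists_sign_dir (V i) (hV i)
  set p := Tuple.sort θ
  have hp : Monotone (θ ∘ p) := Tuple.monotone_sort θ
  have h0 : 0 < 2 * m := by omega
  -- The sorted angles, continued by the antipode of the first vector.
  let ϑ : ℕ → ℝ := fun j => if h : j < 2 * m then θ (p ⟨j, h⟩) else θ (p ⟨0, h0⟩) + Real.pi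
  have hmono : Monotone ϑ := by
    intro i j hij
    simp only [ϑ]
    split_ifs with h1 h2
    · exact hp (by simpa using hij)
    · linarith [hθ0 (p ⟨0, h0⟩), hθπ (p ⟨i, h1⟩)]
    · omega
    · exact le_rfl
  have hend : ϑ (2 * m) = ϑ 0 + Real.pi := by simp [ϑ, h0]
  obtain ⟨k, hk, hpar⟩ := exists_parity m ϑ hmono hend
  let idx : ℕ → Fin (2 * m) := fun j => p ⟨j % (2 * m), Nat.mod_lt _ h0⟩
  have hsign : ∀ j, ∃ b : Bool, j ≤ 2 * m → rsign b • V (idx j) = dir (ϑ j) := by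
    intro j
    rcases lt_trichotomy j (2 * m) with h | h | h
    · refine ⟨β (idx j), fun _ => ?_⟩
      rw [hβ (idx j), smul_smul]
      have : dir (ϑ j) = dir (θ (idx j)) := by simp [ϑ, idx, h, Nat.mod_eq_of_lt h]
      rw [this]
      cases β (idx j) <;> simp [rsign]
    · refine ⟨!β (idx j), fun _ => ?_⟩
      rw [hβ (idx j), smul_smul]
      have : dir (ϑ j) = -dir (θ (idx j)) := by
        rw [← dir_add_pi]; simp [ϑ, idx, h]
      rw [this]
      cases β (idx j) <;> simp [rsign]
    · exact ⟨true, fun h' => by omega⟩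
  choose τ hτ using hsign
  let pos : Fin m ⊕ Fin m → ℕ := Sum.elim (fun i => 2 * i + k + 1) (fun i => 2 * i + k)
  have hposle : ∀ x, pos x ≤ 2 * m := by
    rintro (i | i) <;> simp only [pos, Sum.elim_inl, Sum.elim_inr] <;> omega
  have hinj : Function.Injective (fun x => idx (pos x)) := by
    intro x y hxy
    have h := congrArg Fin.val (p.injective hxy)
    simp only at h
    have hmod : ∀ a, a ≤ 2 * m →
        (a = 2 * m ∧ a % (2 * m) = 0) ∨ (a < 2 * m ∧ a % (2 * m) = a) := by
      intro a ha
      rcases ha.eq_or_lt with h' | h'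
      · exact Or.inl ⟨h', by simp [h']⟩
      · exact Or.inr ⟨h', Nat.mod_eq_of_lt h'⟩
    have hx := hmod _ (hposle x)
    have hy := hmod _ (hposle y)
    generalize pos x % (2 * m) = u at h hx
    generalize pos y % (2 * m) = v at h hy
    clear hxy
    rcases x with i | i <;> rcases y with j | j <;>
      simp only [pos, Sum.elim_inl, Sum.elim_inr] at hx hy <;>
      have hi := i.2 <;> have hj := j.2 <;>
      first
        | exact congrArg _ (Fin.ext (by omega))
        | (exfalso; omega)
  have hbij : Function.Bijective (fun x => idx (pos x)) :=
    (Fintype.bijective_iff_injective_and_card _).2 ⟨hinj, by simp; ring⟩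
  refine ⟨Equiv.ofBijective _ hbij, fun x => τ (pos x), fun b => ?_⟩
  simp only [Equiv.ofBijective_apply]
  have := hpar (fun i => if h : i < m then rsign (b ⟨i, h⟩) else 0) (fun j => by
    split_ifs with h
    · cases b ⟨j, h⟩ <;> simp [rsign]
    · simp)
  rw [← Fin.sum_univ_eq_sum_range (fun i => (if h : i < m then rsign (b ⟨i, h⟩) else 0) •
    (dir (ϑ (2 * i + k + 1)) - dir (ϑ (2 * i + k))))] at this
  convert this using 4 with i
  · simp
  · rw [hτ _ (hposle _), hτ _ (hposle _)]
    rfl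

/-! ### Collisions of two independent signed sums -/

lemma sum_norm_sq_signedSum {d : ℕ} (m : ℕ) (w : Fin m → EuclideanSpace ℝ (Fin d))
    (hw : ∀ i, ‖w i‖ = 1) :
    ∑ a : Fin m → Bool, ‖signedSum w a‖ ^ 2 = m * 2 ^ m := by
  induction m with
  | zero => simp [signedSum]
  | succ m ih =>
    have h := ih (fun i => w i.succ) (fun i => hw _)
    rw [← (Fin.consEquiv fun _ : Fin (m + 1) => Bool).sum_comp, Fintype.sum_prod_type,
      Fintype.sum_bool, ← Finset.sum_add_distrib]
    have step : ∀ a : Fin m → Bool,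
        ‖signedSum w (Fin.consEquiv (fun _ => Bool) (true, a))‖ ^ 2 +
          ‖signedSum w (Fin.consEquiv (fun _ => Bool) (false, a))‖ ^ 2 =
        2 + 2 * ‖signedSum (fun i => w i.succ) a‖ ^ 2 := by
      intro a
      have hp := parallelogram_law_with_norm ℝ (signedSum (fun i => w i.succ) a) (w 0)
      rw [hw 0] at hp
      have h1 : signedSum w (Fin.consEquiv (fun _ => Bool) (true, a)) =
          signedSum (fun i => w i.succ) a + w 0 := by
        simp [signedSum, Fin.sum_univ_succ, rsign, Fin.consEquiv, add_comm]
      have h2 : signedSum w (Fin.consEquiv (fun _ => Bool) (false, a)) =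
          signedSum (fun i => w i.succ) a - w 0 := by
        simp [signedSum, Fin.sum_univ_succ, rsign, Fin.consEquiv, add_comm, sub_eq_add_neg]
      rw [h1, h2]
      linarith
    rw [Finset.sum_congr rfl fun a _ => step a, Finset.sum_add_distrib, ← Finset.mul_sum, h]
    simp
    ring

/-- A map from `G` into a set of size `K` has at least `|G|² / K` colliding pairs. -/
lemma card_sq_le_collisions {α β : Type*} [DecidableEq α] [DecidableEq β] (G : Finset α)
    (T : Finset β) (f : α → β) (hf : ∀ a ∈ G, f a ∈ T) :
    G.card ^ 2 ≤ T.card * ((G ×ˢ G).filter fun q => f q.1 = f q.2).card := by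
  have h1 : G.card = ∑ c ∈ T, (G.filter fun a => f a = c).card :=
    Finset.card_eq_sum_card_fiberwise hf
  have h2 : ((G ×ˢ G).filter fun q => f q.1 = f q.2).card =
      ∑ c ∈ T, (G.filter fun a => f a = c).card ^ 2 := by
    rw [Finset.card_eq_sum_card_fiberwise (f := fun q : α × α => f q.1) (t := T)]
    · refine Finset.sum_congr rfl fun c _ => ?_
      rw [pow_two, ← Finset.card_product]
      congr 1
      ext q
      simp only [Finset.mem_filter, Finset.mem_product]
      constructor
      · rintro ⟨⟨⟨ha, hb⟩, hab⟩, hc⟩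
        exact ⟨⟨ha, hc⟩, hb, hab ▸ hc⟩
      · rintro ⟨⟨ha, hc⟩, hb, hc'⟩
        exact ⟨⟨⟨ha, hb⟩, hc.trans hc'.symm⟩, hc⟩
    · intro q hq
      simp only [Finset.coe_filter, Finset.mem_product, Set.mem_ofPred_eq] at hq
      exact hf _ hq.1.1
  rw [h2]
  nth_rewrite 1 [h1]
  exact sq_sum_le_card_mul_sum_sq

lemma norm_sub_le_of_floor_eq {δ : ℝ} (hδ : 0 < δ) (x y : EuclideanSpace ℝ (Fin 2))
    (h : ∀ k, ⌊x k / (δ / 2)⌋ = ⌊y k / (δ / 2)⌋) : ‖x - y‖ ≤ δ := by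
  have hk : ∀ k, |x k - y k| ≤ δ / 2 := by
    intro k
    have := Int.abs_sub_lt_one_of_floor_eq_floor (h k)
    rw [← sub_div, abs_div, abs_of_pos (half_pos hδ), div_lt_one (half_pos hδ)] at this
    exact this.le
  rw [EuclideanSpace.norm_eq, Fin.sum_univ_two]
  apply Real.sqrt_le_iff.2 ⟨hδ.le, ?_⟩
  have h0 := sq_le_sq' (abs_le.1 (hk 0)).1 (abs_le.1 (hk 0)).2
  have h1 := sq_le_sq' (abs_le.1 (hk 1)).1 (abs_le.1 (hk 1)).2
  simp only [PiLp.sub_apply, Real.norm_eq_abs, sq_abs]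
  nlinarith

/-- Two independent signed sums of the same `m` unit vectors are within `δ` of each other with
probability at least a constant over `m`: by the second moment, half of the signed sums lie in a disc
of radius `√(2m)`, which is covered by `O(m)` square cells of side `δ / 2`. -/
lemma exists_collision_bound {δ : ℝ} (hδ : 0 < δ) :
    ∃ C : ℝ, 0 < C ∧ ∀ m : ℕ, 0 < m → ∀ w : Fin m → EuclideanSpace ℝ (Fin 2),
      (∀ i, ‖w i‖ = 1) →
      (2 ^ m) ^ 2 ≤ C * m * (Finset.univ.filter fun q : (Fin m → Bool) × (Fin m → Bool) =>
        ‖signedSum w q.1 - signedSum w q.2‖ ≤ δ).card := by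
  refine ⟨4 * (2 * (√2 / (δ / 2)) + 3) ^ 2, by positivity, fun m hm w hw => ?_⟩
  set R : ℝ := √(2 * m) with hR
  set K : ℤ := ⌈R / (δ / 2)⌉ with hK
  have hK0 : 0 ≤ K := Int.ceil_nonneg (by positivity)
  set G : Finset (Fin m → Bool) := Finset.univ.filter fun a => ‖signedSum w a‖ ≤ R with hG
  have hm1 : (1 : ℝ) ≤ m := by exact_mod_cast hm
  have hGcard : (2 : ℝ) ^ m ≤ 2 * G.card := by
    have hcompl : G.card + (Finset.univ.filter fun a => ¬ ‖signedSum w a‖ ≤ R).card = 2 ^ m := by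
      rw [hG, Finset.card_filter_add_card_filter_not]
      simp
    have hMarkov : ((Finset.univ.filter fun a => ¬ ‖signedSum w a‖ ≤ R).card : ℝ) * (2 * m) ≤
        m * 2 ^ m := by
      rw [← sum_norm_sq_signedSum m w hw, ← nsmul_eq_mul]
      refine le_trans (Finset.card_nsmul_le_sum _ (fun a => ‖signedSum w a‖ ^ 2) _ ?_)
        (Finset.sum_le_sum_of_subset_of_nonneg (Finset.subset_univ _) fun _ _ _ => by positivity)
      intro a ha
      have := (not_le.1 (Finset.mem_filter.1 ha).2).le
      calc (2 * m : ℝ) = R ^ 2 := (Real.sq_sqrt (by positivity)).symm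
        _ ≤ _ := by gcongr
    have hc : (G.card : ℝ) + (Finset.univ.filter fun a => ¬ ‖signedSum w a‖ ≤ R).card = 2 ^ m := by
      exact_mod_cast hcompl
    have : ((Finset.univ.filter fun a => ¬ ‖signedSum w a‖ ≤ R).card : ℝ) * 2 ≤ 2 ^ m := by
      refine le_of_mul_le_mul_left ?_ (by linarith : (0 : ℝ) < m)
      linarith
    linarith
  let f : (Fin m → Bool) → ℤ × ℤ := fun a =>
    (⌊signedSum w a 0 / (δ / 2)⌋, ⌊signedSum w a 1 / (δ / 2)⌋)
  have hfloor : ∀ a ∈ G, ∀ k, ⌊signedSum w a k / (δ / 2)⌋ ∈ Finset.Icc (-K) K := by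
    intro a ha k
    have h1 : |signedSum w a k| ≤ R := by
      have := PiLp.norm_apply_le (signedSum w a) k
      exact this.trans (Finset.mem_filter.1 ha).2
    have h2 := abs_le.1 h1
    have h3 : R / (δ / 2) ≤ K := Int.le_ceil _
    have h4 : signedSum w a k / (δ / 2) ≤ K :=
      le_trans (by gcongr; exact h2.2) h3
    have h5 : -(K : ℝ) ≤ signedSum w a k / (δ / 2) := by
      refine le_trans (neg_le_neg h3) ?_
      rw [← neg_div]
      gcongr
      exact h2.1
    rw [Finset.mem_Icc]
    refine ⟨Int.le_floor.2 (by push_cast; exact h5), ?_⟩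
    exact Int.cast_le.1 ((Int.floor_le _).trans h4)
  have hcol := card_sq_le_collisions G (Finset.Icc (-K) K ×ˢ Finset.Icc (-K) K) f
    (fun a ha => Finset.mem_product.2 ⟨hfloor a ha 0, hfloor a ha 1⟩)
  have hsub : ((G ×ˢ G).filter fun q => f q.1 = f q.2).card ≤
      (Finset.univ.filter fun q : (Fin m → Bool) × (Fin m → Bool) =>
        ‖signedSum w q.1 - signedSum w q.2‖ ≤ δ).card := by
    refine Finset.card_le_card fun q hq => ?_
    have hq' := Prod.ext_iff.1 (Finset.mem_filter.1 hq).2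
    refine Finset.mem_filter.2 ⟨Finset.mem_univ _, norm_sub_le_of_floor_eq hδ _ _ fun k => ?_⟩
    fin_cases k
    · exact hq'.1
    · exact hq'.2
  set P := (Finset.univ.filter fun q : (Fin m → Bool) × (Fin m → Bool) =>
        ‖signedSum w q.1 - signedSum w q.2‖ ≤ δ).card
  have hI : ((Finset.Icc (-K) K).card : ℝ) = 2 * K + 1 := by
    rw [Int.card_Icc]
    have : (((K + 1 - -K).toNat : ℤ) : ℝ) = ((K + 1 - -K : ℤ) : ℝ) := by
      rw [Int.toNat_of_nonneg (by omega)]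
    push_cast at this
    rw [this]; ring
  have hsm : (1 : ℝ) ≤ √m := Real.one_le_sqrt.2 hm1
  have hIle : ((Finset.Icc (-K) K).card : ℝ) ≤ (2 * (√2 / (δ / 2)) + 3) * √m := by
    have h1 : (K : ℝ) ≤ R / (δ / 2) + 1 := (Int.ceil_lt_add_one _).le
    have h2 : R / (δ / 2) = √2 / (δ / 2) * √m := by
      rw [hR, Real.sqrt_mul (by norm_num)]; ring
    rw [hI]
    rw [h2] at h1
    linarith
  have hcol' : (G.card : ℝ) ^ 2 ≤ ((Finset.Icc (-K) K).card : ℝ) ^ 2 * P := by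
    have := hcol.trans (Nat.mul_le_mul_left _ hsub)
    rw [Finset.card_product, ← pow_two] at this
    exact_mod_cast this
  calc ((2 : ℝ) ^ m) ^ 2 ≤ (2 * G.card) ^ 2 := by gcongr
    _ = 4 * (G.card : ℝ) ^ 2 := by ring
    _ ≤ 4 * (((2 * (√2 / (δ / 2)) + 3) * √m) ^ 2 * P) := by
        refine mul_le_mul_of_nonneg_left (hcol'.trans ?_) (by norm_num)
        gcongr
    _ = 4 * (2 * (√2 / (δ / 2)) + 3) ^ 2 * m * P := by
        rw [mul_pow, Real.sq_sqrt (by positivity)]; ring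

/-! ### Conclusion -/

lemma rsign_beq (x y : Bool) : rsign (x == y) = rsign x * rsign y := by
  cases x <;> cases y <;> simp [rsign]

lemma rsign_not (x : Bool) : rsign (!x) = -rsign x := by
  cases x <;> simp [rsign]

/-- Proposition 3.3: for every real `r > √2` there is a constant `c = c(r) > 0` such that
if `V = (v₁, …, vₙ)` is a sequence of unit vectors in `ℝ²` with `n = 2m` even, then
`Pr[‖σ_V‖ ≤ r] ≥ c / n`. -/
theorem stmt_11 (r : ℝ) (hr : Real.sqrt 2 < r) :
    ∃ c : ℝ, 0 < c ∧
      ∀ m : ℕ, ∀ V : Fin (2 * m) → EuclideanSpace ℝ (Fin 2),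
        (∀ i, ‖V i‖ = 1) →
        c / ((2 * m : ℕ) : ℝ) ≤ probLe V r := by
  obtain ⟨C, hC, hcol⟩ := exists_collision_bound (sub_pos.2 hr)
  refine ⟨2 / C, by positivity, fun m V hV => ?_⟩
  rcases Nat.eq_zero_or_pos m with rfl | hm
  · simp only [mul_zero, Nat.cast_zero, div_zero]
    unfold probLe
    positivity
  obtain ⟨e, t, het⟩ := exists_pairing m V hV
  let w : Fin m → EuclideanSpace ℝ (Fin 2) := fun i => rsign (t (Sum.inl i)) • V (e (Sum.inl i))
  have hw : ∀ i, ‖w i‖ = 1 := by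
    intro i
    simp only [w, norm_smul, hV, mul_one]
    cases t (Sum.inl i) <;> simp [rsign]
  let F : (Fin m → Bool) × (Fin m → Bool) → (Fin (2 * m) → Bool) := fun q j =>
    Sum.elim q.1 (fun i => !q.2 i) (e.symm j) == t (e.symm j)
  have hFinj : Function.Injective F := by
    intro q q' h
    have hx : ∀ x, Sum.elim q.1 (fun i => !q.2 i) x = Sum.elim q'.1 (fun i => !q'.2 i) x := by
      intro x
      have h1 := congrFun h (e x)
      simp only [F, Equiv.symm_apply_apply] at h1
      generalize Sum.elim q.1 (fun i => !q.2 i) x = u at *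
      generalize Sum.elim q'.1 (fun i => !q'.2 i) x = u' at *
      generalize t x = s at *
      revert h1
      cases u <;> cases u' <;> cases s <;> simp
    refine Prod.ext (funext fun i => ?_) (funext fun i => ?_)
    · exact hx (Sum.inl i)
    · simpa using hx (Sum.inr i)
  -- Comparing the second half of each pair with the first half costs at most `√2`.
  have hF : ∀ q, signedSum V (F q) = (signedSum w q.1 - signedSum w q.2) +
      ∑ i, rsign (q.2 i) • (rsign (t (Sum.inl i)) • V (e (Sum.inl i)) -
        rsign (t (Sum.inr i)) • V (e (Sum.inr i))) := by
    intro q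
    unfold signedSum
    rw [← e.sum_comp, Fintype.sum_sum_type]
    simp only [F, Equiv.symm_apply_apply, Sum.elim_inl, Sum.elim_inr, rsign_beq, rsign_not, w,
      mul_smul, neg_smul, smul_sub, Finset.sum_sub_distrib, Finset.sum_neg_distrib]
    abel
  have hcard : (Finset.univ.filter fun q : (Fin m → Bool) × (Fin m → Bool) =>
      ‖signedSum w q.1 - signedSum w q.2‖ ≤ r - √2).card ≤
      Nat.card {ε : Fin (2 * m) → Bool // ‖signedSum V ε‖ ≤ r} := by
    classical
    rw [Nat.card_eq_fintype_card, Fintype.card_subtype]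
    refine Finset.card_le_card_of_injOn F (fun q hq => ?_) hFinj.injOn
    have hq' := (Finset.mem_filter.1 hq).2
    refine Finset.mem_coe.2 (Finset.mem_filter.2 ⟨Finset.mem_univ _, ?_⟩)
    rw [hF q]
    refine (norm_add_le _ _).trans ?_
    linarith [het q.2]
  have h1 := hcol m hm w hw
  have hm0 : (0 : ℝ) < m := by exact_mod_cast hm
  have h2 : ((2 : ℝ) ^ m) ^ 2 ≤
      C * m * (Nat.card {ε : Fin (2 * m) → Bool // ‖signedSum V ε‖ ≤ r} : ℝ) :=
    h1.trans (mul_le_mul_of_nonneg_left (by exact_mod_cast hcard) (by positivity))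
  unfold probLe
  rw [le_div_iff₀ (by positivity), show (2 : ℝ) ^ (2 * m) = (2 ^ m) ^ 2 by rw [← pow_mul, mul_comm]]
  push_cast
  rw [div_div, div_mul_eq_mul_div, div_le_iff₀ (by positivity)]
  linarith
end

section
/- For any γ > 0, if a sequence V = (v_1, …, v_n) of unit vectors in ℝ² is (2,γ)-far, then there exist three vectors u_1, u_2, u_3 among the v_i such that every pair u_i, u_j with i ≠ j is γ-far. -/
/-- Two unit vectors `v, x ∈ ℝ²` are `γ`-close if the angle between `v` and `x`, or the
angle between `−v` and `x`, is at most `γ` radians. -/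
def gClose (γ : ℝ) (v x : EuclideanSpace ℝ (Fin 2)) : Prop :=
  InnerProductGeometry.angle v x ≤ γ ∨ InnerProductGeometry.angle (-v) x ≤ γ

/-- A sequence `V` of unit vectors in `ℝ²` is `(2,γ)`-close if there exist two unit vectors
`x₁, x₂` such that every `vᵢ` is `γ`-close to either `x₁` or `x₂`; it is `(2,γ)`-far
otherwise. -/
def twoClose {n : ℕ} (γ : ℝ) (V : Fin n → EuclideanSpace ℝ (Fin 2)) : Prop :=
  ∃ x₁ x₂ : EuclideanSpace ℝ (Fin 2), ‖x₁‖ = 1 ∧ ‖x₂‖ = 1 ∧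
    ∀ i, gClose γ (V i) x₁ ∨ gClose γ (V i) x₂

/-- Lemma 3.6: for any `γ > 0`, if a sequence `V` of unit vectors in `ℝ²` is `(2,γ)`-far,
then there are three vectors `u₁, u₂, u₃` among the `vᵢ` such that every pair `uᵢ, uⱼ`
with `i ≠ j` is `γ`-far. -/
theorem stmt_12 (γ : ℝ) (hγ : 0 < γ) (n : ℕ)
    (V : Fin n → EuclideanSpace ℝ (Fin 2))
    (hunit : ∀ i, ‖V i‖ = 1)
    (hfar : ¬ twoClose γ V) :
    ∃ i₁ i₂ i₃ : Fin n,
      ¬ gClose γ (V i₁) (V i₂) ∧ ¬ gClose γ (V i₁) (V i₃) ∧ ¬ gClose γ (V i₂) (V i₃) := by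
  -- Greedy choice: take any `p`, then `q` far from `p` since `(p, p)` is not a pair of centres,
  -- then `r` far from both since `(p, q)` is not a pair of centres.
  have key : ∀ x y : EuclideanSpace ℝ (Fin 2), ‖x‖ = 1 → ‖y‖ = 1 →
      ∃ i, ¬ gClose γ (V i) x ∧ ¬ gClose γ (V i) y := by
    intro x y hx hy
    by_contra! h
    exact hfar ⟨x, y, hx, hy, fun i => or_iff_not_imp_left.mpr (h i)⟩
  -- Any unit vector serves to show that the sequence is nonempty.
  have he : ‖(EuclideanSpace.single 0 1 : EuclideanSpace ℝ (Fin 2))‖ = 1 := by simp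
  obtain ⟨p, -⟩ := key _ _ he he
  obtain ⟨q, hqp, -⟩ := key _ _ (hunit p) (hunit p)
  obtain ⟨r, hrp, hrq⟩ := key _ _ (hunit p) (hunit q)
  exact ⟨r, q, p, hrq, hrp, hqp⟩
end

section
/- Given unit vectors u, u' ∈ ℝ² and any vector w ∈ ℝ² with ‖w‖ ≤ 1/2, there is a choice of signs ε, ε' ∈ {−1,+1} such that ‖w + ε u + ε' u'‖ ≤ √2. -/
/-!
The vectors `p = u + u'` and `q = u - u'` are orthogonal with `‖p‖² + ‖q‖² = 4`, and the four
candidates are `w ± p` and `w ± q`. Put `A = |⟪w, p⟫|` and `B = |⟪w, q⟫|`. If all four candidates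
had norm greater than `√2`, then `‖w‖² - 2A + ‖p‖² > 2` and `‖w‖² - 2B + ‖q‖² > 2`. Adding these
gives `‖w‖² > A + B`, and each alone gives `‖p‖², ‖q‖² > 7/4`. On the other hand, expanding `w` in
the orthogonal frame `p, q` gives `‖w‖² = A²/‖p‖² + B²/‖q‖²`, and `A ≤ ‖w‖‖p‖ ≤ ‖p‖²/2`
(likewise for `B`), whence `‖w‖² ≤ (A + B)/2`, a contradiction.
-/

/-- The scalar core of the argument: `N, P, Q` are the squared norms of `w`, `p`, `q`, the numbers
`t, r` are the inner products of `w` with `p, q`, and `hpar` is Parseval's identity for the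
orthogonal frame `p, q` with denominators cleared. -/
lemma scalar_contradiction {N P Q t r : ℝ} (hN : N ≤ 1 / 4) (hPQ : P + Q = 4)
    (hpar : N * P * Q = t ^ 2 * Q + r ^ 2 * P) (ht : t ^ 2 ≤ N * P) (hr : r ^ 2 ≤ N * Q)
    (h1 : 2 < N + 2 * t + P) (h2 : 2 < N - 2 * t + P)
    (h3 : 2 < N + 2 * r + Q) (h4 : 2 < N - 2 * r + Q) : False := by
  have hA : 2 < N - 2 * |t| + P := by rcases abs_cases t with h | h <;> linarith
  have hB : 2 < N - 2 * |r| + Q := by rcases abs_cases r with h | h <;> linarith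
  have hA0 := abs_nonneg t
  have hB0 := abs_nonneg r
  have hP : 1 < P := by linarith
  have hQ : 1 < Q := by linarith
  have hA1 : |t| ≤ P / 2 := abs_le_of_sq_le_sq (by nlinarith) (by linarith)
  have hB1 : |r| ≤ Q / 2 := abs_le_of_sq_le_sq (by nlinarith) (by linarith)
  have hA2 : t ^ 2 ≤ |t| * (P / 2) := by
    rw [← sq_abs, sq]; exact mul_le_mul_of_nonneg_left hA1 hA0
  have hB2 : r ^ 2 ≤ |r| * (Q / 2) := by
    rw [← sq_abs, sq]; exact mul_le_mul_of_nonneg_left hB1 hB0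
  have hPQ0 : 0 < P * Q := by positivity
  have hle : N * (P * Q) ≤ (|t| + |r|) / 2 * (P * Q) := by
    have e1 := mul_le_mul_of_nonneg_right hA2 (by linarith : 0 ≤ Q)
    have e2 := mul_le_mul_of_nonneg_right hB2 (by linarith : 0 ≤ P)
    linarith
  have := le_of_mul_le_mul_right hle hPQ0
  linarith

/-- Lemma 3.9: given unit vectors `u, u' ∈ ℝ²` and any `w ∈ ℝ²` with `‖w‖ ≤ 1/2`, there
are signs `ε, ε' ∈ {−1,+1}` such that `‖w + ε u + ε' u'‖ ≤ √2`. -/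
theorem stmt_16 (u u' w : EuclideanSpace ℝ (Fin 2))
    (hu : ‖u‖ = 1) (hu' : ‖u'‖ = 1) (hw : ‖w‖ ≤ 1 / 2) :
    ∃ ε ε' : ℝ, (ε = 1 ∨ ε = -1) ∧ (ε' = 1 ∨ ε' = -1) ∧
      ‖w + ε • u + ε' • u'‖ ≤ Real.sqrt 2 := by
  by_contra! H
  have key : ∀ ε ε' : ℝ, (ε = 1 ∨ ε = -1) → (ε' = 1 ∨ ε' = -1) →
      2 < (w 0 + ε * u 0 + ε' * u' 0) ^ 2 + (w 1 + ε * u 1 + ε' * u' 1) ^ 2 := by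
    intro ε ε' h h'
    have := (Real.sqrt_lt' (lt_of_le_of_lt (Real.sqrt_nonneg 2) (H ε ε' h h'))).1 (H ε ε' h h')
    simpa [EuclideanSpace.real_norm_sq_eq, Fin.sum_univ_two] using this
  have hu2 : u 0 ^ 2 + u 1 ^ 2 = 1 := by
    have := EuclideanSpace.real_norm_sq_eq u
    rw [hu, Fin.sum_univ_two] at this; linarith
  have hu2' : u' 0 ^ 2 + u' 1 ^ 2 = 1 := by
    have := EuclideanSpace.real_norm_sq_eq u'
    rw [hu', Fin.sum_univ_two] at this; linarith
  have hw2 : w 0 ^ 2 + w 1 ^ 2 ≤ 1 / 4 := by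
    have := EuclideanSpace.real_norm_sq_eq w
    rw [Fin.sum_univ_two] at this
    nlinarith [norm_nonneg w]
  have h1 := key 1 1 (by simp) (by simp)
  have h2 := key (-1) (-1) (by simp) (by simp)
  have h3 := key 1 (-1) (by simp) (by simp)
  have h4 := key (-1) 1 (by simp) (by simp)
  clear key H
  generalize u 0 = a at *
  generalize u 1 = b at *
  generalize u' 0 = c at *
  generalize u' 1 = d at *
  generalize w 0 = x at *
  generalize w 1 = y at *
  have horth : (a + c) * (a - c) + (b + d) * (b - d) = 0 := by linarith
  refine scalar_contradiction (N := x ^ 2 + y ^ 2) (P := (a + c) ^ 2 + (b + d) ^ 2)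
    (Q := (a - c) ^ 2 + (b - d) ^ 2) (t := x * (a + c) + y * (b + d))
    (r := x * (a - c) + y * (b - d)) hw2 (by linarith) ?_ ?_ ?_
    (by linarith) (by linarith) (by linarith) (by linarith)
  · -- The Gram determinant of three vectors in the plane vanishes; `horth` removes its
    -- terms containing the inner product of `p` and `q`.
    linear_combination ((x ^ 2 + y ^ 2) * ((a + c) * (a - c) + (b + d) * (b - d))
      - 2 * (x * (a + c) + y * (b + d)) * (x * (a - c) + y * (b - d))) * horth
  · nlinarith [sq_nonneg (x * (b + d) - y * (a + c))]
  · nlinarith [sq_nonneg (x * (b - d) - y * (a - c))]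
end

section
/- Let γ = arcsin(0.1) and let V = (v_1, …, v_n) be a sequence of unit vectors in ℝ² with n even which is (2,γ)-far. Then there exist a permutation π of {1, …, n} and signs s_1, …, s_n ∈ {−1,+1} such that Σ_{i=1}^{n/2} ‖s_{π(2i−1)} v_{π(2i−1)} − s_{π(2i)} v_{π(2i)}‖² ≤ 1.9995. -/
/-- The unit vector of `ℝ²` at angle `a`. -/
noncomputable def unitVec (a : ℝ) : EuclideanSpace ℝ (Fin 2) := !₂[Real.cos a, Real.sin a]

lemma inner_unitVec (a b : ℝ) : inner ℝ (unitVec a) (unitVec b) = Real.cos (a - b) := by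
  simp [unitVec, PiLp.inner_apply, Fin.sum_univ_two, Real.cos_sub]
  ring

lemma norm_unitVec (a : ℝ) : ‖unitVec a‖ = 1 := by
  have h : ‖unitVec a‖ ^ 2 = 1 := by
    rw [← real_inner_self_eq_norm_sq, inner_unitVec]; simp
  nlinarith [norm_nonneg (unitVec a)]

lemma norm_unitVec_sub_sq (a b : ℝ) :
    ‖unitVec a - unitVec b‖ ^ 2 = 2 - 2 * Real.cos (b - a) := by
  rw [norm_sub_sq_real, inner_unitVec, norm_unitVec, norm_unitVec, ← Real.cos_neg (a - b)]
  ring_nf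

lemma unitVec_add_pi (a : ℝ) : unitVec (a + Real.pi) = -unitVec a := by
  ext i
  fin_cases i <;> simp [unitVec]

/-- Every unit vector is, up to sign, at an angle in `[0, π]`. -/
lemma exists_unitVec (v : EuclideanSpace ℝ (Fin 2)) (hv : ‖v‖ = 1) :
    ∃ a r : ℝ, 0 ≤ a ∧ a ≤ Real.pi ∧ (r = 1 ∨ r = -1) ∧ r • v = unitVec a := by
  have hsq : v 0 ^ 2 + v 1 ^ 2 = 1 := by
    have h := EuclideanSpace.real_norm_sq_eq v
    rw [hv, Fin.sum_univ_two] at h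
    linarith
  obtain ⟨r, hr, hr1⟩ : ∃ r : ℝ, (r = 1 ∨ r = -1) ∧ 0 ≤ r * v 1 := by
    rcases le_total 0 (v 1) with h | h
    · exact ⟨1, Or.inl rfl, by linarith⟩
    · exact ⟨-1, Or.inr rfl, by linarith⟩
  have hr2 : r ^ 2 = 1 := by rcases hr with rfl | rfl <;> norm_num
  refine ⟨Real.arccos (r * v 0), r, Real.arccos_nonneg _, Real.arccos_le_pi _, hr, ?_⟩
  have hc : (r * v 0) ^ 2 ≤ 1 := by
    rw [mul_pow, hr2]; nlinarith [sq_nonneg (v 1)]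
  have hc' := abs_le.mp ((sq_le_one_iff_abs_le_one _).mp hc)
  have hs : 1 - (r * v 0) ^ 2 = (r * v 1) ^ 2 := by
    rw [mul_pow, mul_pow, hr2]; linarith
  ext i
  fin_cases i
  · simp [unitVec, Real.cos_arccos hc'.1 hc'.2]
  · simp [unitVec, Real.sin_arccos, hs, Real.sqrt_sq hr1]

lemma angle_unitVec_le {a b : ℝ} (hab : |a - b| ≤ 0.1) :
    InnerProductGeometry.angle (unitVec a) (unitVec b) ≤ Real.arcsin 0.1 := by
  have h1 : InnerProductGeometry.angle (unitVec a) (unitVec b) = |a - b| := by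
    rw [InnerProductGeometry.angle, inner_unitVec, norm_unitVec, norm_unitVec, ← Real.cos_abs]
    simp only [mul_one, div_one]
    exact Real.arccos_cos (abs_nonneg _) (by linarith [Real.pi_gt_three])
  have h2 : (0.1 : ℝ) ≤ Real.arcsin 0.1 := by
    rw [Real.le_arcsin_iff_sin_le' ⟨by linarith [Real.pi_gt_three], by linarith [Real.pi_gt_three]⟩]
    exact Real.sin_le (by norm_num)
  linarith

lemma gClose_unitVec {v : EuclideanSpace ℝ (Fin 2)} {r a b : ℝ} (hr : r = 1 ∨ r = -1)
    (hv : r • v = unitVec a) (hab : |a - b| ≤ 0.1) : gClose (Real.arcsin 0.1) v (unitVec b) := by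
  have h := angle_unitVec_le hab
  rw [← hv] at h
  rcases hr with rfl | rfl
  · left; simpa using h
  · right; simpa using h

/-- Two gaps of the cyclic sequence that cover all but `0.1` of the half-turn leave two clusters;
the one containing the wrap-around is centred at `t 0`. -/
lemma twoClose_of_gaps {N : ℕ} (V : Fin N → EuclideanSpace ℝ (Fin 2)) (t : ℕ → ℝ)
    (ht : Monotone t) (htN : t N = t 0 + Real.pi) (σ : Equiv.Perm (Fin N))
    (hV : ∀ j : Fin N, ∃ r : ℝ, (r = 1 ∨ r = -1) ∧ r • V (σ j) = unitVec (t j))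
    {p q : ℕ} (hpq : p < q) (hqN : q < N)
    (hgap : Real.pi - 0.1 ≤ (t (p + 1) - t p) + (t (q + 1) - t q)) :
    twoClose (Real.arcsin 0.1) V := by
  refine ⟨unitVec (t q), unitVec (t 0), norm_unitVec _, norm_unitVec _, fun i => ?_⟩
  obtain ⟨j, rfl⟩ := σ.surjective i
  obtain ⟨r, hr, hrV⟩ := hV j
  have h0p := ht (Nat.zero_le p)
  have hpq' := ht (Nat.succ_le_of_lt hpq)
  have hqN' := ht (Nat.succ_le_of_lt hqN)
  simp only [Nat.succ_eq_add_one] at hpq' hqN'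
  have h0j := ht (Nat.zero_le j)
  rcases Nat.lt_or_ge p j with hj | hj
  · have h1 := ht (Nat.succ_le_of_lt hj)
    simp only [Nat.succ_eq_add_one] at h1
    rcases Nat.lt_or_ge q j with hj' | hj'
    · right
      have h2 := ht (Nat.succ_le_of_lt hj')
      simp only [Nat.succ_eq_add_one] at h2
      have h3 := ht j.2.le
      -- beyond the second gap the point is close to `t 0 + π`, that is, to `-unitVec (t 0)`
      have hneg : (-r) • V (σ j) = unitVec (t j - Real.pi) := by
        have h4 := unitVec_add_pi (t j - Real.pi)
        rw [sub_add_cancel] at h4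
        rw [neg_smul, hrV, h4, neg_neg]
      refine gClose_unitVec (r := -r) ?_ hneg (abs_le.mpr ⟨by linarith, by linarith⟩)
      rcases hr with rfl | rfl
      · right; rfl
      · left; norm_num
    · left
      have h2 := ht hj'
      exact gClose_unitVec hr hrV (abs_le.mpr ⟨by linarith, by linarith⟩)
  · right
    have h1 := ht hj
    exact gClose_unitVec hr hrV (abs_le.mpr ⟨by linarith, by linarith⟩)

/-- The chord bound for `x ↦ 2 - 2 cos x` on `[0, K]`, summed. -/
lemma sum_cost_le (m : ℕ) (a : ℕ → ℝ) {K C : ℝ} (hK0 : 0 < K) (hK : K ≤ Real.pi / 2)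
    (hC : 2 - 2 * Real.cos K ≤ C) (ha : ∀ i < m, 0 ≤ a i ∧ a i ≤ K) :
    ∑ i ∈ Finset.range m, (2 - 2 * Real.cos (a i)) ≤ C / K * ∑ i ∈ Finset.range m, a i := by
  rw [Finset.mul_sum]
  refine Finset.sum_le_sum fun i hi => ?_
  obtain ⟨h0, h1⟩ := ha i (Finset.mem_range.mp hi)
  have hpi := Real.pi_pos
  have hw1 : a i / K ≤ 1 := (div_le_one hK0).mpr h1
  have hw0 : 0 ≤ a i / K := div_nonneg h0 hK0.le
  have hconc := strictConcaveOn_cos_Icc.concaveOn.2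
    (show (0 : ℝ) ∈ Set.Icc (-(Real.pi / 2)) (Real.pi / 2) from ⟨by linarith, by linarith⟩)
    (show K ∈ Set.Icc (-(Real.pi / 2)) (Real.pi / 2) from ⟨by linarith, hK⟩)
    (sub_nonneg.mpr hw1) hw0 (by ring)
  simp only [smul_eq_mul, mul_zero, zero_add, Real.cos_zero, mul_one,
    div_mul_cancel₀ _ hK0.ne'] at hconc
  calc 2 - 2 * Real.cos (a i) ≤ a i / K * (2 - 2 * Real.cos K) := by nlinarith
    _ ≤ a i / K * C := mul_le_mul_of_nonneg_left hC hw0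
    _ = C / K * a i := by ring

lemma two_sub_two_cos_le {K ε : ℝ} (h0 : 0 < ε) (hK : 0 ≤ K)
    (hKε : K + ε ≤ Real.pi / 2) : 2 - 2 * Real.cos K ≤ 2 - 2 * (ε - ε ^ 3 / 6) := by
  have hs := Real.sin_gt_sub_cube h0
  have hmono := Real.cos_le_cos_of_nonneg_of_le_pi hK
    (by linarith [Real.pi_pos] : Real.pi / 2 - ε ≤ Real.pi) (by linarith)
  rw [Real.cos_pi_div_two_sub] at hmono
  linarith

lemma cost_or_gap (m : ℕ) (a b : ℕ → ℝ) (ha : ∀ i < m, 0 ≤ a i) (hb : ∀ i < m, 0 ≤ b i)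
    (hab : ∑ i ∈ Finset.range m, a i + ∑ i ∈ Finset.range m, b i = Real.pi) :
    ∑ i ∈ Finset.range m, (2 - 2 * Real.cos (a i)) ≤ 1.9995 ∨
    ∑ i ∈ Finset.range m, (2 - 2 * Real.cos (b i)) ≤ 1.9995 ∨
    ∃ i < m, ∃ j < m, 1.53 < a i ∧ 1.53 < b j := by
  have hpi := Real.pi_gt_d4
  have hpi' := Real.pi_lt_d4
  have h53 : 2 - 2 * Real.cos 1.53 ≤ 1.9188 :=
    (two_sub_two_cos_le (ε := 0.0407) (by norm_num) (by norm_num)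
      (by linarith)).trans (by norm_num)
  have h55 : 2 - 2 * Real.cos 1.55 ≤ 1.9588 :=
    (two_sub_two_cos_le (ε := 0.0207) (by norm_num) (by norm_num)
      (by linarith)).trans (by norm_num)
  have small : ∀ c : ℕ → ℝ, (∀ i < m, 0 ≤ c i) → ∑ i ∈ Finset.range m, c i ≤ 1.55 →
      ∑ i ∈ Finset.range m, (2 - 2 * Real.cos (c i)) ≤ 1.9995 := by
    intro c hc hsum
    have h := sum_cost_le m c (by norm_num) (by linarith) h55 fun i hi => ⟨hc i hi,
      (Finset.single_le_sum (fun j hj => hc j (Finset.mem_range.mp hj))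
        (Finset.mem_range.mpr hi)).trans hsum⟩
    norm_num at h ⊢
    linarith
  have flat : ∀ c : ℕ → ℝ, (∀ i < m, 0 ≤ c i) → ∑ i ∈ Finset.range m, c i ≤ 1.5916 →
      (∀ i < m, c i ≤ 1.53) → ∑ i ∈ Finset.range m, (2 - 2 * Real.cos (c i)) ≤ 1.9995 := by
    intro c hc hsum hle
    have h := sum_cost_le m c (by norm_num) (by linarith) h53 fun i hi => ⟨hc i hi, hle i hi⟩
    norm_num at h hsum ⊢
    linarith
  by_cases hA : ∑ i ∈ Finset.range m, a i ≤ 1.55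
  · exact Or.inl (small a ha hA)
  by_cases hB : ∑ i ∈ Finset.range m, b i ≤ 1.55
  · exact Or.inr (Or.inl (small b hb hB))
  by_cases hA' : ∀ i < m, a i ≤ 1.53
  · exact Or.inl (flat a ha (by linarith) hA')
  by_cases hB' : ∀ i < m, b i ≤ 1.53
  · exact Or.inr (Or.inl (flat b hb (by linarith) hB'))
  push Not at hA' hB'
  obtain ⟨i, hi, hi'⟩ := hA'
  obtain ⟨j, hj, hj'⟩ := hB'
  exact Or.inr (Or.inr ⟨i, hi, j, hj, hi', hj'⟩)

/-- Signs chosen along a listing of the vectors, as a function of the vector's original index. -/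
lemma exists_signs {n : ℕ} (V : Fin n → EuclideanSpace ℝ (Fin 2))
    (π : Equiv.Perm (Fin n)) (u : ℕ → ℝ)
    (hV : ∀ j : Fin n, ∃ r : ℝ, (r = 1 ∨ r = -1) ∧ r • V (π j) = unitVec (u j)) :
    ∃ s : Fin n → ℝ, (∀ i, s i = 1 ∨ s i = -1) ∧
      ∀ j, s (π j) • V (π j) = unitVec (u j) := by
  choose r hr hrV using hV
  exact ⟨fun i => r (π.symm i), fun i => hr _, fun j => by simp [hrV]⟩

lemma exists_rotation (N : ℕ) :
    ∃ ρ : Equiv.Perm (Fin N), ∀ j : Fin N, (ρ j : ℕ) =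
      if (j : ℕ) + 1 < N then (j : ℕ) + 1 else 0 := by
  cases N with
  | zero => exact ⟨1, fun j => j.elim0⟩
  | succ n =>
    refine ⟨finRotate (n + 1), fun j => ?_⟩
    rw [coe_finRotate]
    have hj := j.2
    by_cases h : j = Fin.last n
    · simp [h]
    · have h' : (j : ℕ) ≠ n := fun h' => h (Fin.ext h')
      rw [if_neg h, if_pos (by omega)]


/-- The claim in Theorem 3.10: let `γ = arcsin(0.1)` and let `V = (v₁, …, vₙ)` be unit
vectors in `ℝ²` with `n = 2m` even which is `(2,γ)`-far.  Then one can reorder (permute)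
and negate some of the vectors of `V` so that `Σ_{i=1}^{n/2} ‖v_{2i−1} − v_{2i}‖² ≤ 1.9995`
for the resulting sequence. -/
theorem stmt_18 (m : ℕ) (V : Fin (2 * m) → EuclideanSpace ℝ (Fin 2))
    (hunit : ∀ i, ‖V i‖ = 1)
    (hfar : ¬ twoClose (Real.arcsin 0.1) V) :
    ∃ (π : Equiv.Perm (Fin (2 * m))) (s : Fin (2 * m) → ℝ),
      (∀ i, s i = 1 ∨ s i = -1) ∧
      ∑ i : Fin m,
          ‖s (π ⟨2 * i.1, by have := i.2; omega⟩) • V (π ⟨2 * i.1, by have := i.2; omega⟩)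
            - s (π ⟨2 * i.1 + 1, by have := i.2; omega⟩) •
                V (π ⟨2 * i.1 + 1, by have := i.2; omega⟩)‖ ^ 2
        ≤ 1.9995 := by
  rcases Nat.eq_zero_or_pos m with rfl | hm
  · exact ⟨1, fun _ => 1, fun _ => Or.inl rfl, by norm_num⟩
  choose θ r hθ0 hθπ hr hrV using fun i => exists_unitVec (V i) (hunit i)
  let σ := Tuple.sort θ
  have hσ : Monotone (θ ∘ σ) := Tuple.monotone_sort θ
  let z : Fin (2 * m) := ⟨0, by omega⟩
  let t : ℕ → ℝ := fun j => if h : j < 2 * m then θ (σ ⟨j, h⟩) else θ (σ z) + Real.pi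
  have ht_lt : ∀ (j : ℕ) (h : j < 2 * m), t j = θ (σ ⟨j, h⟩) := fun j h => dif_pos h
  have ht_ge : ∀ j : ℕ, ¬ j < 2 * m → t j = θ (σ z) + Real.pi := fun j h => dif_neg h
  have ht0 : t 0 = θ (σ z) := ht_lt 0 (by omega)
  have htN : t (2 * m) = t 0 + Real.pi := by rw [ht0, ht_ge _ (lt_irrefl _)]
  have ht : Monotone t := by
    intro i j hij
    by_cases hj : j < 2 * m
    · rw [ht_lt j hj, ht_lt i (by omega)]
      exact hσ (show (⟨i, _⟩ : Fin (2 * m)) ≤ ⟨j, _⟩ from hij)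
    · rw [ht_ge j hj]
      by_cases hi : i < 2 * m
      · rw [ht_lt i hi]
        linarith [hθ0 (σ z), hθπ (σ ⟨i, hi⟩)]
      · rw [ht_ge i hi]
  have hV : ∀ j : Fin (2 * m), ∃ r : ℝ, (r = 1 ∨ r = -1) ∧ r • V (σ j) = unitVec (t j) := by
    intro j
    exact ⟨r (σ j), hr _, by rw [hrV, ht_lt j j.2]⟩
  have hsum : ∑ i ∈ Finset.range m, (t (2 * i + 1) - t (2 * i)) +
      ∑ i ∈ Finset.range m, (t (2 * i + 1 + 1) - t (2 * i + 1)) = Real.pi := by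
    rw [← Finset.sum_add_distrib]
    have h := Finset.sum_range_sub (fun i => t (2 * i)) m
    simp only [mul_zero, htN, add_sub_cancel_left] at h
    rw [← h]
    refine Finset.sum_congr rfl fun i _ => ?_
    rw [show 2 * (i + 1) = 2 * i + 1 + 1 by ring]
    ring
  have hgap : ∀ j, 0 ≤ t (j + 1) - t j := fun j => sub_nonneg.mpr (ht (Nat.le_succ j))
  rcases cost_or_gap m (fun i => t (2 * i + 1) - t (2 * i))
    (fun i => t (2 * i + 1 + 1) - t (2 * i + 1)) (fun i _ => hgap _) (fun i _ => hgap _) hsum with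
    h | h | ⟨i, hi, j, hj, hai, hbj⟩
  · obtain ⟨s, hs, hsV⟩ := exists_signs V σ t hV
    refine ⟨σ, s, hs, ?_⟩
    simp only [hsV, norm_unitVec_sub_sq]
    rwa [Finset.sum_range] at h
  · obtain ⟨ρ, hρ⟩ := exists_rotation (2 * m)
    suffices hV' : ∀ j : Fin (2 * m), ∃ r : ℝ, (r = 1 ∨ r = -1) ∧
        r • V ((ρ.trans σ) j) = unitVec (t (j + 1)) by
      obtain ⟨s, hs, hsV⟩ := exists_signs V (ρ.trans σ) (fun j => t (j + 1)) hV'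
      refine ⟨ρ.trans σ, s, hs, ?_⟩
      simp only [hsV, norm_unitVec_sub_sq]
      rwa [Finset.sum_range] at h
    intro j
    obtain ⟨r', hr', hrV'⟩ := hV (ρ j)
    rw [Equiv.trans_apply]
    by_cases hlast : (j : ℕ) + 1 < 2 * m
    · refine ⟨r', hr', ?_⟩
      rw [hrV', hρ, if_pos hlast]
    -- the rotated list ends with the vector of `t 0`, reached after a half-turn: its sign flips
    · have hj : (j : ℕ) + 1 = 2 * m := by have := j.2; omega
      refine ⟨-r', ?_, ?_⟩
      · rcases hr' with rfl | rfl
        · right; rfl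
        · left; norm_num
      · rw [neg_smul, hrV', hρ, if_neg hlast]
        simp only [hj, htN, unitVec_add_pi]
  · have hpi := Real.pi_lt_d4
    refine (hfar ?_).elim
    rcases Nat.lt_or_ge (2 * i) (2 * j + 1) with hij | hij
    · exact twoClose_of_gaps V t ht htN σ hV hij (by omega) (by linarith)
    · exact twoClose_of_gaps V t ht htN σ hV (show 2 * j + 1 < 2 * i by omega) (by omega)
        (by linarith)
end
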